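/- There is a constant c such that for every directed acyclic graph G as above and every m ≥ N, the clause set Stone(G,m) has a regWRTL refutation of size at most c·N·m³. -/

import Mathlib

open scoped Classical

/-! ### Clauses and literals -/

abbrev Lit (V : Type) := V × Bool
abbrev Clause (V : Type) := Finset (V × Bool)

/-- Propositional variables for the Stone principle: `p i j` and `r j`. -/
inductive SV where
  | p (i j : ℕ) : SV
  | r (j : ℕ) : SV
deriving DecidableEq

/-- A dag on vertices `1,…,N` with unique sink `1`, in which every non-source vertex
(the vertices `1,…,n`) has exactly the two predecessors `p1 i` and `p2 i`,
every edge `(i′,i)` satisfies `i′ > i`, and the sources are exactly `n+1,…,N`. -/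
structure StoneDag where
  N : ℕ
  n : ℕ
  p1 : ℕ → ℕ
  p2 : ℕ → ℕ
  n_lt_N : n < N
  p1_gt : ∀ i, 1 ≤ i → i ≤ n → i < p1 i
  p2_gt : ∀ i, 1 ≤ i → i ≤ n → i < p2 i
  p1_le : ∀ i, 1 ≤ i → i ≤ n → p1 i ≤ N
  p2_le : ∀ i, 1 ≤ i → i ≤ n → p2 i ≤ N
  p_ne : ∀ i, 1 ≤ i → i ≤ n → p1 i ≠ p2 i
  unique_sink : ∀ i, 2 ≤ i → i ≤ N → ∃ v, 1 ≤ v ∧ v ≤ n ∧ (p1 v = i ∨ p2 v = i)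

/-- The clause set `Stone(G,m)`. -/
def stoneClauses (G : StoneDag) (m : ℕ) : Set (Clause SV) :=
  { C | ∃ i, 1 ≤ i ∧ i ≤ G.N ∧
      C = (Finset.Icc 1 m).image (fun j => ((SV.p i j, true) : Lit SV)) } ∪
  { C | ∃ i j, G.n < i ∧ i ≤ G.N ∧ 1 ≤ j ∧ j ≤ m ∧
      C = {(SV.p i j, false), (SV.r j, true)} } ∪
  { C | ∃ j, 1 ≤ j ∧ j ≤ m ∧ C = {(SV.p 1 j, false), (SV.r j, false)} } ∪
  { C | ∃ i j j' j'', 1 ≤ i ∧ i ≤ G.n ∧ 1 ≤ j ∧ j ≤ m ∧ 1 ≤ j' ∧ j' ≤ m ∧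
      1 ≤ j'' ∧ j'' ≤ m ∧ j ≠ j' ∧ j ≠ j'' ∧
      C = {(SV.p (G.p1 i) j', false), (SV.r j', false),
           (SV.p (G.p2 i) j'', false), (SV.r j'', false),
           (SV.p i j, false), (SV.r j, true)} }

/-! ### Resolution inference rules -/

/-- `(A ∖ {x}) ∪ (B ∖ {¬x})`. -/
def wres {V : Type} [DecidableEq V] (x : V) (A B : Clause V) : Clause V :=
  A.erase (x, true) ∪ B.erase (x, false)

/-- w-resolution inference. -/
def wstep {V : Type} [DecidableEq V] (x : V) (A B C : Clause V) : Prop :=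
  C = wres x A B

/-- ordinary resolution inference. -/
def rstep {V : Type} [DecidableEq V] (x : V) (A B C : Clause V) : Prop :=
  (x, true) ∈ A ∧ (x, false) ∈ B ∧ C = wres x A B

/-- degenerate resolution inference. -/
def dstep {V : Type} [DecidableEq V] (x : V) (A B C : Clause V) : Prop :=
  ((x, true) ∈ A ∧ (x, false) ∈ B ∧ C = wres x A B) ∨
  ((x, true) ∈ A ∧ (x, false) ∉ B ∧ C = B) ∨
  ((x, true) ∉ A ∧ (x, false) ∈ B ∧ C = A) ∨
  ((x, true) ∉ A ∧ (x, false) ∉ B ∧ (C = A ∨ C = B))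

/-! ### Tree-like proofs -/

/-- Binary proof trees: each node is labeled with a clause, internal nodes also
with a resolution variable. -/
inductive PTree (V : Type) [DecidableEq V] where
  | leaf : Clause V → PTree V
  | node : Clause V → V → PTree V → PTree V → PTree V

namespace PTree

variable {V : Type} [DecidableEq V]

/-- The clause labeling the root. -/
def clause : PTree V → Clause V
  | leaf c => c
  | node c _ _ _ => c

/-- Number of nodes. -/
def size : PTree V → ℕ
  | leaf _ => 1
  | node _ _ t1 t2 => t1.size + t2.size + 1

/-- The set of variables used as resolution variables. -/
def resVars : PTree V → Finset V
  | leaf _ => ∅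
  | node _ x t1 t2 => insert x (t1.resVars ∪ t2.resVars)

/-- No variable is used as a resolution variable more than once on any
root-to-leaf path. -/
def regular : PTree V → Prop
  | leaf _ => True
  | node _ x t1 t2 => x ∉ t1.resVars ∧ x ∉ t2.resVars ∧ t1.regular ∧ t2.regular

/-- Every internal node is obtained from its children by the inference `step`. -/
def wf (step : V → Clause V → Clause V → Clause V → Prop) : PTree V → Prop
  | leaf _ => True
  | node c x t1 t2 => step x t1.clause t2.clause c ∧ t1.wf step ∧ t2.wf step

/-- All clauses occurring in the tree. -/
def clauses : PTree V → Set (Clause V)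
  | leaf c => {c}
  | node c _ t1 t2 => t1.clauses ∪ t2.clauses ∪ {c}

/-- Every leaf is labeled by a clause of `Γ` or by a clause occurring strictly
earlier in postorder; `S` is the set of clauses occurring before this subtree. -/
def lemmasOK (Γ : Set (Clause V)) : PTree V → Set (Clause V) → Prop
  | leaf c, S => c ∈ Γ ∨ c ∈ S
  | node _ _ t1 t2, S => t1.lemmasOK Γ S ∧ t2.lemmasOK Γ (S ∪ t1.clauses)

/-- Every leaf is labeled by a clause of `Γ`. -/
def leavesIn (Γ : Set (Clause V)) : PTree V → Prop
  | leaf c => c ∈ Γ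
  | node _ _ t1 t2 => t1.leavesIn Γ ∧ t2.leavesIn Γ

/-- Postorder scan computing, from the set `L` of clauses learned so far
(initially `Γ`), the pair of (i) the set of clauses learned after traversing the
subtree — a clause becomes learned when it is the final clause of an input
subderivation, i.e. a subderivation each of whose inferences has at least one
hypothesis that is already learned — and (ii) whether this subtree is an input
subderivation. -/
def scan : PTree V → Set (Clause V) → Set (Clause V) × Prop
  | leaf _, L => (L, True)
  | node c _ t1 t2, L =>
      let r1 := t1.scan L
      let r2 := t2.scan r1.1
      let inp : Prop := r1.2 ∧ r2.2 ∧ (t1.clause ∈ r1.1 ∨ t2.clause ∈ r2.1)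
      ({ d | d ∈ r2.1 ∨ (inp ∧ d = c) }, inp)

/-- Every leaf is labeled by a learned clause (a clause of the initial set `L`,
or one derived by an input subderivation strictly earlier in postorder). -/
def lemOK : PTree V → Set (Clause V) → Prop
  | leaf c, L => c ∈ L
  | node _ _ t1 t2, L => t1.lemOK L ∧ t2.lemOK (t1.scan L).1

end PTree

/-- regWRTL refutation of `Γ`. -/
def RegWRTLRefutation {V : Type} [DecidableEq V] (Γ : Set (Clause V)) (T : PTree V) : Prop :=
  T.clause = ∅ ∧ T.wf wstep ∧ T.regular ∧ T.lemmasOK Γ ∅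

/-- pool resolution refutation of `Γ`. -/
def PoolRefutation {V : Type} [DecidableEq V] (Γ : Set (Clause V)) (T : PTree V) : Prop :=
  T.clause = ∅ ∧ T.wf dstep ∧ T.regular ∧ T.lemmasOK Γ ∅

/-- regRTL refutation of `Γ`. -/
def RegRTLRefutation {V : Type} [DecidableEq V] (Γ : Set (Clause V)) (T : PTree V) : Prop :=
  T.clause = ∅ ∧ T.wf rstep ∧ T.regular ∧ T.lemmasOK Γ ∅

/-- regRTI refutation of `Γ`: all lemmas are input lemmas. -/
def RegRTIRefutation {V : Type} [DecidableEq V] (Γ : Set (Clause V)) (T : PTree V) : Prop :=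
  T.clause = ∅ ∧ T.wf rstep ∧ T.regular ∧ T.lemOK Γ

/-- regRTI derivation of the clause `D` from `Γ`. -/
def RegRTIDeriv {V : Type} [DecidableEq V] (Γ : Set (Clause V)) (D : Clause V)
    (T : PTree V) : Prop :=
  T.clause = D ∧ T.wf rstep ∧ T.regular ∧ T.lemOK Γ ∧
  ∀ x ∈ T.resVars, (x, true) ∉ D ∧ (x, false) ∉ D

/-- regular tree-like resolution derivation of the clause `D` from `Γ`. -/
def RegTreeDeriv {V : Type} [DecidableEq V] (Γ : Set (Clause V)) (D : Clause V)
    (T : PTree V) : Prop :=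
  T.clause = D ∧ T.wf rstep ∧ T.regular ∧ T.leavesIn Γ ∧
  ∀ x ∈ T.resVars, (x, true) ∉ D ∧ (x, false) ∉ D

/-! ### Dag-like derivations -/

/-- A dag-like resolution derivation: a sequence of `len` clauses, each an
axiom (`just i = none`) or obtained by resolution from two earlier clauses. -/
structure DagDeriv (V : Type) [DecidableEq V] where
  len : ℕ
  cl : ℕ → Clause V
  just : ℕ → Option (ℕ × ℕ × V)

namespace DagDeriv

variable {V : Type} [DecidableEq V]

/-- Validity relative to the initial clause set `Γ`. -/
def ok (D : DagDeriv V) (Γ : Set (Clause V)) : Prop :=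
  ∀ i, i < D.len →
    match D.just i with
    | none => D.cl i ∈ Γ
    | some (a, b, x) => a < i ∧ b < i ∧ rstep x (D.cl a) (D.cl b) (D.cl i)

/-- `j` is a premise of `i`. -/
def prem (D : DagDeriv V) (i j : ℕ) : Prop :=
  ∃ a b x, D.just i = some (a, b, x) ∧ (j = a ∨ j = b)

/-- `j` lies in the subderivation of `i` (is reachable from `i` in the dag). -/
def reach (D : DagDeriv V) : ℕ → ℕ → Prop := Relation.ReflTransGen D.prem

/-- `x` is the resolution variable of the inference at `i`. -/
def resAt (D : DagDeriv V) (i : ℕ) (x : V) : Prop := ∃ a b, D.just i = some (a, b, x)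

/-- No variable is used as resolution variable twice along a path of the dag. -/
def regular (D : DagDeriv V) : Prop :=
  ∀ i a b x, D.just i = some (a, b, x) →
    ∀ j, (D.reach a j ∨ D.reach b j) → ¬ D.resAt j x

/-- The subderivation of `i` uses `x` as a resolution variable. -/
def usesVar (D : DagDeriv V) (i : ℕ) (x : V) : Prop := ∃ j, D.reach i j ∧ D.resAt j x

end DagDeriv

/-! ### Supports, bypassing, and the sets `B`, `B⁺`, `S_ℓ^B(C)` for a clause
`C = ¬p_{i_1,j_1} ∨ … ∨ ¬p_{i_k,j_k}` given by `k` and the functions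
`I J : ℕ → ℕ` (with `I ℓ = i_ℓ`, `J ℓ = j_ℓ` for `1 ≤ ℓ ≤ k`). -/

/-- Index `ℓ` is bypassed. -/
def bypassed (k : ℕ) (J : ℕ → ℕ) (ℓ : ℕ) : Prop :=
  ∃ ℓ', ℓ < ℓ' ∧ ℓ' ≤ k ∧ J ℓ' = J ℓ

/-- `ℓ'` is the max-bypasser of `ℓ`. -/
def maxByp (k : ℕ) (J : ℕ → ℕ) (ℓ ℓ' : ℕ) : Prop :=
  ℓ < ℓ' ∧ ℓ' ≤ k ∧ J ℓ' = J ℓ ∧ ∀ a, ℓ < a → a ≤ k → J a = J ℓ → a ≤ ℓ'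

/-- `i_{ℓ'}` directly supports `i_ℓ`. -/
def dsup (G : StoneDag) (k : ℕ) (I J : ℕ → ℕ) (ℓ' ℓ : ℕ) : Prop :=
  1 ≤ ℓ ∧ ℓ < ℓ' ∧ ℓ' ≤ k ∧
  (maxByp k J ℓ ℓ' ∨
    (¬ bypassed k J ℓ ∧ (I ℓ' = G.p1 (I ℓ) ∨ I ℓ' = G.p2 (I ℓ))))

/-- `i_a` supports `i_b`: reflexive transitive closure of direct support. -/
def supp (G : StoneDag) (k : ℕ) (I J : ℕ → ℕ) : ℕ → ℕ → Prop :=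
  Relation.ReflTransGen (dsup G k I J)

/-- `dom(C)` as a set of vertices. -/
def domv (k : ℕ) (I : ℕ → ℕ) : Set ℕ := { v | ∃ a, 1 ≤ a ∧ a ≤ k ∧ I a = v }

/-- `S_ℓ(C)`: the set of vertices of `dom(C)` supporting `i_ℓ`. -/
def suppSet (G : StoneDag) (k : ℕ) (I J : ℕ → ℕ) (ℓ : ℕ) : Set ℕ :=
  { v | ∃ a, 1 ≤ a ∧ a ≤ k ∧ I a = v ∧ supp G k I J a ℓ }

/-- `i_ℓ ∈ B`: not bypassed and some predecessor outside `dom(C)`. -/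
def Bidx (G : StoneDag) (k : ℕ) (I J : ℕ → ℕ) (ℓ : ℕ) : Prop :=
  1 ≤ ℓ ∧ ℓ ≤ k ∧ ¬ bypassed k J ℓ ∧
  (G.p1 (I ℓ) ∉ domv k I ∨ G.p2 (I ℓ) ∉ domv k I)

/-- `i_ℓ ∈ B₁`: exactly one predecessor outside `dom(C)`. -/
def B1idx (G : StoneDag) (k : ℕ) (I J : ℕ → ℕ) (ℓ : ℕ) : Prop :=
  Bidx G k I J ℓ ∧ (G.p1 (I ℓ) ∈ domv k I ∨ G.p2 (I ℓ) ∈ domv k I)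

/-- `i_ℓ ∈ B₂`: both predecessors outside `dom(C)`. -/
def B2idx (G : StoneDag) (k : ℕ) (I J : ℕ → ℕ) (ℓ : ℕ) : Prop :=
  1 ≤ ℓ ∧ ℓ ≤ k ∧ ¬ bypassed k J ℓ ∧
  G.p1 (I ℓ) ∉ domv k I ∧ G.p2 (I ℓ) ∉ domv k I

/-- `i_ℓ ∈ B⁺`: in `B`, or bypassed with max-bypasser in `B`. -/
def Bplus (G : StoneDag) (k : ℕ) (I J : ℕ → ℕ) (ℓ : ℕ) : Prop :=
  Bidx G k I J ℓ ∨ (1 ≤ ℓ ∧ ℓ ≤ k ∧ ∃ ℓ', maxByp k J ℓ ℓ' ∧ Bidx G k I J ℓ')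

/-- Membership in `S_ℓ^B(C)` (on indices). -/
inductive SBmem (G : StoneDag) (k : ℕ) (I J : ℕ → ℕ) (ℓ : ℕ) : ℕ → Prop where
  | base : SBmem G k I J ℓ ℓ
  | byp (a b : ℕ) : SBmem G k I J ℓ a → (a = ℓ ∨ ¬ Bidx G k I J a) →
      maxByp k J a b → ¬ Bidx G k I J b → SBmem G k I J ℓ b
  | pred (a b : ℕ) : SBmem G k I J ℓ a → (a = ℓ ∨ ¬ Bidx G k I J a) →
      ¬ bypassed k J a → 1 ≤ b → b ≤ k →
      (I b = G.p1 (I a) ∨ I b = G.p2 (I a)) → SBmem G k I J ℓ b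

/-- The clause `C_ℓ`. -/
noncomputable def Clc (G : StoneDag) (k : ℕ) (I J : ℕ → ℕ) (ℓ : ℕ) : Clause SV :=
  ((Finset.Icc 1 k).filter fun a =>
      SBmem G k I J ℓ a ∧ ¬(a = ℓ ∧ bypassed k J ℓ)).image
    fun a => ((SV.p (I a) (J a), false) : Lit SV)

/-- The clause `E_ℓ`. -/
noncomputable def Elc (G : StoneDag) (k : ℕ) (I J : ℕ → ℕ) (ℓ : ℕ) : Clause SV :=
  ((Finset.Icc 1 k).filter fun a =>
      SBmem G k I J ℓ a ∧ Bplus G k I J a ∧ (Bidx G k I J ℓ → a ≠ ℓ)).image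
    fun a => ((SV.r (J a), false) : Lit SV)

/-- `t_1,…,t_r` enumerates the indices of `B ∪ {1}` in decreasing order. -/
def EnumB (G : StoneDag) (k : ℕ) (I J : ℕ → ℕ) (r : ℕ) (t : ℕ → ℕ) : Prop :=
  (∀ q, 1 ≤ q → q ≤ r → (Bidx G k I J (t q) ∨ t q = 1)) ∧
  (∀ q q', 1 ≤ q → q < q' → q' ≤ r → t q' < t q) ∧
  (∀ ℓ, Bidx G k I J ℓ ∨ ℓ = 1 → ∃ q, 1 ≤ q ∧ q ≤ r ∧ t q = ℓ)

/-- The clause `F_q`. -/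
noncomputable def Fcl (G : StoneDag) (k : ℕ) (I J : ℕ → ℕ) (r : ℕ) (t : ℕ → ℕ)
    (q : ℕ) : Clause SV :=
  if q = r ∧ ¬ Bidx G k I J 1 then Elc G k I J 1
  else (Finset.Icc 1 (q - 1)).image fun q' => ((SV.r (J (t q')), false) : Lit SV)

/-- The standing hypotheses on the clause `C`: `k ≥ 1`, `1 = i_1 < … < i_k ≤ n`,
`j_ℓ ∈ {1,…,m}`, and every vertex of `dom(C)` supports vertex `1`. -/
def GoodC (G : StoneDag) (m k : ℕ) (I J : ℕ → ℕ) : Prop :=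
  1 ≤ k ∧ I 1 = 1 ∧ I k ≤ G.n ∧
  (∀ a b, 1 ≤ a → a < b → b ≤ k → I a < I b) ∧
  (∀ a, 1 ≤ a → a ≤ k → 1 ≤ J a ∧ J a ≤ m) ∧
  (∀ a, 1 ≤ a → a ≤ k → supp G k I J a 1)

/-!
The refutation follows a spine of branches in which the vertices `1,…,i` all carry stone `1`, and
which ends in the clause `¬p_{1,1} ∨ … ∨ ¬p_{i,1}`. Given the lemmas `¬p_{u,j} ∨ r_j` for all
`u > i + 1`, the same clause for vertex `i + 1` has a derivation of size `O(m²)`, by cases on the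
stones on the two predecessors of `i + 1`. In the branch that puts a stone `j ≠ 1` on vertex `i + 1`
this clause is learned and also helps to close the branch: stone `j` is red, hence so is stone `1`
on vertex `i`, contradicting stone `1` on the sink. The branch `j = 1` continues the spine and is
traversed first, so it supplies the lemmas for `u > i + 1`, but it cannot learn `¬p_{i+1,1} ∨ r_1`
itself. A branch `j ≠ 1` does so by a w-resolution on `p_{i+1,1}`, a variable not used on its path.
-/

section Derivable

variable {V : Type}

/-- Every clause of `L` is a weakening of a clause of `S`. The clauses of `L` are plain sets of
literals, because they only ever serve as upper bounds for the clauses occurring in a tree. -/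
def Subsumes (S : Set (Clause V)) (L : Set (Set (Lit V))) : Prop :=
  ∀ q ∈ L, ∃ C ∈ S, (C : Set (Lit V)) ⊆ q

theorem Subsumes.mono {S S' : Set (Clause V)} {L L' : Set (Set (Lit V))} (h : Subsumes S L)
    (hS : S ⊆ S') (hL : L' ⊆ L) : Subsumes S' L' := fun q hq =>
  let ⟨C, hC, hCq⟩ := h q (hL hq)
  ⟨C, hS hC, hCq⟩

variable [DecidableEq V]

namespace PTree

/-- A regWRTL derivation of a subclause of `F` from `Γ`, with lemmas taken from `S` or from the
tree itself, resolving only on variables of `A`, and with at most `s` nodes. -/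
structure Derives (Γ S : Set (Clause V)) (A : Set V) (F : Set (Lit V)) (s : ℕ) (t : PTree V) :
    Prop where
  wf : t.wf wstep
  regular : t.regular
  lemmasOK : t.lemmasOK Γ S
  clause_subset : (t.clause : Set (Lit V)) ⊆ F
  resVars_subset : (t.resVars : Set V) ⊆ A
  size_le : t.size ≤ s

variable {Γ S : Set (Clause V)} {A A' : Set V} {F F' : Set (Lit V)} {s s' s₁ s₂ : ℕ}
  {t t₁ t₂ : PTree V}

theorem clause_mem_clauses (t : PTree V) : t.clause ∈ t.clauses := by
  cases t <;> simp [clause, clauses]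

theorem Derives.mono (h : t.Derives Γ S A F s) (hA : A ⊆ A') (hF : F ⊆ F') (hs : s ≤ s') :
    t.Derives Γ S A' F' s' where
  wf := h.wf
  regular := h.regular
  lemmasOK := h.lemmasOK
  clause_subset := h.clause_subset.trans hF
  resVars_subset := h.resVars_subset.trans hA
  size_le := h.size_le.trans hs

theorem derives_leaf {C : Clause V} (hC : C ∈ Γ ∪ S) (hF : (C : Set (Lit V)) ⊆ F) :
    (leaf C).Derives Γ S A F 1 where
  wf := trivial
  regular := trivial
  lemmasOK := hC
  clause_subset := hF
  resVars_subset := by simp [resVars]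
  size_le := le_rfl

theorem coe_wres_subset {x : V} {C₁ C₂ : Clause V} (h₁ : (C₁ : Set (Lit V)) ⊆ insert (x, true) F)
    (h₂ : (C₂ : Set (Lit V)) ⊆ insert (x, false) F) : (wres x C₁ C₂ : Set (Lit V)) ⊆ F := by
  simp only [wres, Finset.coe_union, Finset.coe_erase]
  exact Set.union_subset (Set.sdiff_singleton_subset_iff.2 h₁) (Set.sdiff_singleton_subset_iff.2 h₂)

theorem Derives.resolve {x : V} (hx : x ∈ A)
    (h₁ : t₁.Derives Γ S (A \ {x}) (insert (x, true) F) s₁)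
    (h₂ : t₂.Derives Γ (S ∪ t₁.clauses) (A \ {x}) (insert (x, false) F) s₂) :
    (node (wres x t₁.clause t₂.clause) x t₁ t₂).Derives Γ S A F (s₁ + s₂ + 1) where
  wf := ⟨rfl, h₁.wf, h₂.wf⟩
  regular := ⟨fun h => (h₁.resVars_subset h).2 rfl, fun h => (h₂.resVars_subset h).2 rfl,
    h₁.regular, h₂.regular⟩
  lemmasOK := ⟨h₁.lemmasOK, h₂.lemmasOK⟩
  clause_subset := coe_wres_subset h₁.clause_subset h₂.clause_subset
  resVars_subset := by
    simp only [resVars, Finset.coe_insert, Finset.coe_union]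
    exact Set.insert_subset hx (Set.union_subset (h₁.resVars_subset.trans Set.sdiff_subset)
      (h₂.resVars_subset.trans Set.sdiff_subset))
  size_le := Nat.succ_le_succ (add_le_add h₁.size_le h₂.size_le)

end PTree

/-- Whenever the clauses of `L` are available up to weakening, there is a regWRTL derivation of a
subclause of `F` of size at most `s` that resolves only on variables of `A`, and after it the
clauses of `L'` are available up to weakening. -/
def Derivable (Γ : Set (Clause V)) (L L' : Set (Set (Lit V))) (A : Set V) (F : Set (Lit V))
    (s : ℕ) : Prop :=
  ∀ S : Set (Clause V), Subsumes (Γ ∪ S) L →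
    ∃ t : PTree V, t.Derives Γ S A F s ∧ Subsumes (Γ ∪ (S ∪ t.clauses)) L'

namespace Derivable

variable {Γ : Set (Clause V)} {K L L' L₁ L₂ : Set (Set (Lit V))} {A A' : Set V}
  {F F' : Set (Lit V)} {s s' s₁ s₂ : ℕ}

theorem mono (h : Derivable Γ L L' A F s) (hA : A ⊆ A') (hF : F ⊆ F') (hs : s ≤ s') :
    Derivable Γ L L' A' F' s' := fun S hS =>
  let ⟨t, ht, hL'⟩ := h S hS
  ⟨t, ht.mono hA hF hs, hL'⟩

theorem mono_lemmas (h : Derivable Γ L L' A F s) (hL : L ⊆ L₁) (hL' : L₂ ⊆ L') :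
    Derivable Γ L₁ L₂ A F s := fun S hS =>
  let ⟨t, ht, h'⟩ := h S (hS.mono subset_rfl hL)
  ⟨t, ht, h'.mono subset_rfl hL'⟩

theorem keep_lemmas (h : Derivable Γ L L' A F s) (hL : L ⊆ K) :
    Derivable Γ K (K ∪ L') A F s := by
  intro S hS
  obtain ⟨t, ht, hL'⟩ := h S (hS.mono subset_rfl hL)
  refine ⟨t, ht, ?_⟩
  rintro q (hq | hq)
  · exact hS.mono (Set.union_subset_union_right _ Set.subset_union_left) subset_rfl q hq
  · exact hL' q hq

theorem learn (h : Derivable Γ L L' A F s) : Derivable Γ L (insert F L') A F s := by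
  intro S hS
  obtain ⟨t, ht, hL'⟩ := h S hS
  refine ⟨t, ht, ?_⟩
  rintro q (rfl | hq)
  · exact ⟨t.clause, Or.inr (Or.inr t.clause_mem_clauses), ht.clause_subset⟩
  · exact hL' q hq

theorem of_mem_initial {C : Clause V} (hC : C ∈ Γ) (hF : (C : Set (Lit V)) ⊆ F) :
    Derivable Γ L L A F 1 := fun _ hS =>
  ⟨.leaf C, PTree.derives_leaf (Or.inl hC) hF,
    hS.mono (Set.union_subset_union_right _ Set.subset_union_left) subset_rfl⟩

theorem of_mem_lemmas {q : Set (Lit V)} (hq : q ∈ L) (hF : q ⊆ F) : Derivable Γ L L A F 1 :=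
  fun _ hS =>
  let ⟨C, hC, hCq⟩ := hS q hq
  ⟨.leaf C, PTree.derives_leaf hC (hCq.trans hF),
    hS.mono (Set.union_subset_union_right _ Set.subset_union_left) subset_rfl⟩

theorem resolve {x : V} (hx : x ∈ A)
    (h₁ : Derivable Γ L L₁ (A \ {x}) (insert (x, true) F) s₁)
    (h₂ : Derivable Γ L₁ L₂ (A \ {x}) (insert (x, false) F) s₂) :
    Derivable Γ L L₂ A F (s₁ + s₂ + 1) := by
  intro S hS
  obtain ⟨t₁, ht₁, hL₁⟩ := h₁ S hS
  obtain ⟨t₂, ht₂, hL₂⟩ := h₂ (S ∪ t₁.clauses) hL₁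
  refine ⟨_, ht₁.resolve hx ht₂, hL₂.mono (Set.union_subset_union_right _ ?_) subset_rfl⟩
  rw [Set.union_assoc]
  exact Set.union_subset_union_right _ Set.subset_union_left

theorem resolve_of_mem_or {x : V} (hx : x ∈ A ∨ (x, false) ∈ F)
    (h₁ : Derivable Γ L L (A \ {x}) (insert (x, true) F) s₁)
    (h₂ : Derivable Γ L L (A \ {x}) (insert (x, false) F) s₂) :
    Derivable Γ L L A F (s₁ + s₂ + 1) := by
  rcases hx with hx | hx
  · exact h₁.resolve hx h₂
  · exact h₂.mono Set.sdiff_subset (Set.insert_subset hx subset_rfl) (by omega)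

theorem resolve_all {x : ℕ → V} (hx : Function.Injective x) {M : ℕ → Set (Set (Lit V))} (m : ℕ)
    (hA : ∀ k < m, x k ∈ A)
    (h₀ : Derivable Γ K L (A \ Set.range x) (F ∪ (fun k => (x k, true)) '' Set.Iio m) s₁)
    (h : ∀ k < m, Derivable Γ L (M k) (A \ Set.range x) (insert (x k, false) F) s₂) :
    Derivable Γ K (L ∪ ⋃ k < m, M k) A F (s₁ + m * (s₂ + 1)) := by
  induction m generalizing A F with
  | zero => exact (h₀.mono_lemmas subset_rfl (by simp)).mono Set.sdiff_subset (by simp) (by simp)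
  | succ m ih =>
    have hdiff : A \ Set.range x ⊆ (A \ {x m}) \ Set.range x :=
      fun y hy => ⟨⟨hy.1, fun h => hy.2 ⟨m, h.symm⟩⟩, hy.2⟩
    have hleft : Derivable Γ K (L ∪ ⋃ k < m, M k) (A \ {x m}) (insert (x m, true) F)
        (s₁ + m * (s₂ + 1)) := by
      refine ih (fun k hk => ⟨hA k (by omega), fun h => hk.ne (hx h)⟩)
        (h₀.mono hdiff ?_ le_rfl)
        (fun k hk => (h k (by omega)).mono hdiff
          (Set.insert_subset_insert (Set.subset_insert _ _)) le_rfl)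
      rw [Set.Iio_add_one_eq_Iic, ← Set.Iio_insert, Set.image_insert_eq, Set.union_insert,
        Set.insert_union]
    have hright : Derivable Γ (L ∪ ⋃ k < m, M k) ((L ∪ ⋃ k < m, M k) ∪ M m) (A \ {x m})
        (insert (x m, false) F) s₂ :=
      ((h m m.lt_succ_self).mono (hdiff.trans Set.sdiff_subset) subset_rfl le_rfl).keep_lemmas
        Set.subset_union_left
    rw [Set.biUnion_lt_succ, ← Set.union_assoc]
    exact (hleft.resolve (hA m m.lt_succ_self) hright).mono subset_rfl subset_rfl
      (by rw [Nat.succ_mul]; omega)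

theorem exists_regWRTLRefutation (h : Derivable Γ ∅ L' A ∅ s) :
    ∃ T : PTree V, RegWRTLRefutation Γ T ∧ T.size ≤ s := by
  obtain ⟨T, hT, -⟩ := h ∅ (by simp [Subsumes])
  exact ⟨T, ⟨by simpa using hT.clause_subset, hT.wf, hT.regular, hT.lemmasOK⟩, hT.size_le⟩

end Derivable

end Derivable

section Stone

variable {G : StoneDag} {m : ℕ}

theorem vertexClause_mem_stoneClauses {v : ℕ} (hv : 1 ≤ v) (hvN : v ≤ G.N) :
    (Finset.Icc 1 m).image (fun j => ((SV.p v j, true) : Lit SV)) ∈ stoneClauses G m :=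
  Or.inl (Or.inl (Or.inl ⟨v, hv, hvN, rfl⟩))

theorem sourceClause_mem_stoneClauses {i j : ℕ} (hn : G.n < i) (hi : i ≤ G.N) (hj : 1 ≤ j)
    (hjm : j ≤ m) : ({(SV.p i j, false), (SV.r j, true)} : Clause SV) ∈ stoneClauses G m :=
  Or.inl (Or.inl (Or.inr ⟨i, j, hn, hi, hj, hjm, rfl⟩))

theorem sinkClause_mem_stoneClauses {j : ℕ} (hj : 1 ≤ j) (hjm : j ≤ m) :
    ({(SV.p 1 j, false), (SV.r j, false)} : Clause SV) ∈ stoneClauses G m :=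
  Or.inl (Or.inr ⟨j, hj, hjm, rfl⟩)

theorem innerClause_mem_stoneClauses {i j j' j'' : ℕ} (hi : 1 ≤ i) (hn : i ≤ G.n) (hj : 1 ≤ j)
    (hjm : j ≤ m) (hj' : 1 ≤ j') (hj'm : j' ≤ m) (hj'' : 1 ≤ j'') (hj''m : j'' ≤ m)
    (hne' : j ≠ j') (hne'' : j ≠ j'') :
    ({(SV.p (G.p1 i) j', false), (SV.r j', false), (SV.p (G.p2 i) j'', false), (SV.r j'', false),
      (SV.p i j, false), (SV.r j, true)} : Clause SV) ∈ stoneClauses G m :=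
  Or.inr ⟨i, j, j', j'', hi, hn, hj, hjm, hj', hj'm, hj'', hj''m, hne', hne'', rfl⟩

/-- The clause `¬p_{u,j} ∨ r_j`: if stone `j` lies on vertex `u`, then it is red. -/
def redClause (u j : ℕ) : Set (Lit SV) := {(SV.p u j, false), (SV.r j, true)}

/-- The clauses `redClause u j` for the vertices `u > i` and all stones `j`. -/
def redAbove (G : StoneDag) (m i : ℕ) : Set (Set (Lit SV)) :=
  {q | ∃ u j, i < u ∧ u ≤ G.N ∧ 1 ≤ j ∧ j ≤ m ∧ q = redClause u j}

/-- The variables `p_{u,j}` with `u > i` and all variables `r_j`. -/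
def varsAbove (i : ℕ) : Set SV :=
  {x | match x with
    | .p u _ => i < u
    | .r _ => True}

/-- The clause `¬p_{1,1} ∨ … ∨ ¬p_{i,1}`: the branch in which the vertices `1,…,i` all carry
stone `1`. -/
def spineClause (i : ℕ) : Set (Lit SV) := {l | ∃ u, 1 ≤ u ∧ u ≤ i ∧ l = (SV.p u 1, false)}

theorem varsAbove_succ_subset (i : ℕ) :
    varsAbove (i + 1) ⊆ varsAbove i \ Set.range (SV.p (i + 1)) := by
  rintro (⟨u, j⟩ | j) hx
  · have hu : i + 1 < u := hx
    exact ⟨show i < u by omega, by rintro ⟨k, hk⟩; cases hk; omega⟩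
  · exact ⟨trivial, by rintro ⟨k, hk⟩; cases hk⟩

theorem spineClause_zero : spineClause 0 = ∅ := by
  refine Set.eq_empty_of_forall_notMem ?_
  rintro l ⟨u, hu, hui, -⟩
  omega

theorem spineClause_succ (i : ℕ) :
    spineClause (i + 1) = insert (SV.p (i + 1) 1, false) (spineClause i) := by
  ext l
  constructor
  · rintro ⟨u, hu, hui, rfl⟩
    rcases Nat.le_succ_iff.1 hui with hui | rfl
    exacts [Or.inr ⟨u, hu, hui, rfl⟩, Or.inl rfl]
  · rintro (rfl | ⟨u, hu, hui, rfl⟩)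
    exacts [⟨i + 1, by omega, le_rfl, rfl⟩, ⟨u, hu, by omega, rfl⟩]

theorem redAbove_eq_empty {i : ℕ} (hi : G.N ≤ i) : redAbove G m i = ∅ := by
  refine Set.eq_empty_of_forall_notMem ?_
  rintro q ⟨u, j, hu, huN, -⟩
  omega

variable {L : Set (Set (Lit SV))} {A : Set SV} {F : Set (Lit SV)} {s : ℕ}

theorem derivable_of_sink {j : ℕ} (hj : 1 ≤ j) (hjm : j ≤ m) (hp : (SV.p 1 j, false) ∈ F)
    (hr : (SV.r j, false) ∈ F) : Derivable (stoneClauses G m) L L A F 1 :=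
  .of_mem_initial (sinkClause_mem_stoneClauses hj hjm) (by simp [Set.insert_subset_iff, hp, hr])

theorem derivable_of_stone_cases {u : ℕ} (hu : 1 ≤ u) (huN : u ≤ G.N)
    (hA : ∀ k, 1 ≤ k → k ≤ m → SV.p u k ∈ A)
    (h : ∀ k, 1 ≤ k → k ≤ m → Derivable (stoneClauses G m) L L (A \ Set.range (SV.p u))
      (insert (SV.p u k, false) F) s) :
    Derivable (stoneClauses G m) L L A F (1 + m * (s + 1)) := by
  have hrange : Set.range (fun k => SV.p u (k + 1)) ⊆ Set.range (SV.p u) :=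
    Set.range_subset_iff.2 fun k => ⟨k + 1, rfl⟩
  refine (Derivable.resolve_all (x := fun k => SV.p u (k + 1)) (M := fun _ => L)
    (fun _ _ hab => by simpa using hab) m (fun k hk => hA _ (by omega) hk)
    (.of_mem_initial (vertexClause_mem_stoneClauses hu huN) ?_)
    (fun k hk => (h (k + 1) (by omega) hk).mono (Set.sdiff_subset_sdiff_right hrange) subset_rfl
      le_rfl)).mono_lemmas subset_rfl Set.subset_union_left
  intro l hl
  obtain ⟨j, hj, rfl⟩ := Finset.mem_image.1 hl
  obtain ⟨hj, hjm⟩ := Finset.mem_Icc.1 hj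
  exact Or.inr ⟨j - 1, show j - 1 < m by omega, by simp [Nat.sub_add_cancel hj]⟩

/-- In the branch of the refutation given by the falsified clause `F`, vertex `u` can be assumed to
carry a red stone other than `j`: either `F` says so, or the clauses `redClause u k` are available
for a case distinction on the stone on `u`. -/
def RedOrKnown (m : ℕ) (L : Set (Set (Lit SV))) (A : Set SV) (F : Set (Lit SV)) (u j : ℕ) : Prop :=
  (∃ k, 1 ≤ k ∧ k ≤ m ∧ k ≠ j ∧ (SV.p u k, false) ∈ F ∧ (SV.r k, false) ∈ F) ∨
    ∀ k, 1 ≤ k → k ≤ m → SV.p u k ∈ A ∧ redClause u k ∈ L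

theorem RedOrKnown.mono {A' : Set SV} {F' : Set (Lit SV)} {u j : ℕ} (h : RedOrKnown m L A F u j)
    (hA : ∀ k, SV.p u k ∈ A → SV.p u k ∈ A') (hF : F ⊆ F') : RedOrKnown m L A' F' u j :=
  h.imp (fun ⟨k, hk, hkm, hkj, hp, hr⟩ => ⟨k, hk, hkm, hkj, hF hp, hF hr⟩)
    fun h k hk hkm => ⟨hA k (h k hk hkm).1, (h k hk hkm).2⟩

theorem derivable_of_red_stone {u j : ℕ} (hu : 1 ≤ u) (huN : u ≤ G.N) (hm : 1 ≤ m)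
    (hF : (SV.r j, true) ∈ F) (hred : RedOrKnown m L A F u j)
    (hr : ∀ k, 1 ≤ k → k ≤ m → k ≠ j → SV.r k ∈ A ∨ (SV.r k, false) ∈ F)
    (h : ∀ k, 1 ≤ k → k ≤ m → k ≠ j → Derivable (stoneClauses G m) L L
      ((A \ Set.range (SV.p u)) \ {SV.r k}) (insert (SV.r k, false) (insert (SV.p u k, false) F))
      s) :
    Derivable (stoneClauses G m) L L A F (1 + m * (s + 3)) := by
  rcases hred with ⟨k, hk, hkm, hkj, hpF, hrF⟩ | hknown
  · exact (h k hk hkm hkj).mono (Set.sdiff_subset.trans Set.sdiff_subset)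
      (Set.insert_subset hrF (Set.insert_subset hpF subset_rfl)) (by nlinarith)
  · refine derivable_of_stone_cases (s := s + 2) hu huN (fun k hk hkm => (hknown k hk hkm).1)
      fun k hk hkm => ?_
    have hlemma := (hknown k hk hkm).2
    rcases eq_or_ne k j with rfl | hkj
    · refine (Derivable.of_mem_lemmas hlemma ?_).mono subset_rfl subset_rfl (by omega)
      simp [redClause, Set.insert_subset_iff, hF]
    · have hfree : SV.r k ∈ A \ Set.range (SV.p u) ∨ (SV.r k, false) ∈ insert (SV.p u k, false) F :=
        (hr k hk hkm hkj).imp (fun hA => ⟨hA, by simp⟩) Or.inr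
      refine (Derivable.resolve_of_mem_or hfree (Derivable.of_mem_lemmas hlemma ?_)
        (h k hk hkm hkj)).mono subset_rfl subset_rfl (by omega)
      simp [redClause, Set.insert_subset_iff]

theorem derivable_of_redOrKnown_above {i j : ℕ} (hi : 1 ≤ i) (hiN : i ≤ G.N)
    (hj : 1 ≤ j) (hjm : j ≤ m) (hp : (SV.p i j, false) ∈ F) (hF : (SV.r j, true) ∈ F)
    (hred : ∀ u, i < u → u ≤ G.N → RedOrKnown m L A F u j)
    (hr : ∀ k, 1 ≤ k → k ≤ m → k ≠ j → SV.r k ∈ A ∨ (SV.r k, false) ∈ F) :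
    Derivable (stoneClauses G m) L L A F (9 * m ^ 2) := by
  have hm : 1 ≤ m := hj.trans hjm
  rcases lt_or_ge G.n i with hn | hn
  · exact (Derivable.of_mem_initial (sourceClause_mem_stoneClauses hn hiN hj hjm)
      (by simp [Set.insert_subset_iff, hp, hF])).mono subset_rfl subset_rfl (by nlinarith)
  have h₁ := G.p1_gt i hi hn
  have h₂ := G.p2_gt i hi hn
  refine (derivable_of_red_stone (s := 1 + m * 4) (by omega) (G.p1_le i hi hn) hm hF
    (hred _ h₁ (G.p1_le i hi hn)) hr fun j' hj' hj'm hne' => ?_).mono subset_rfl subset_rfl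
    (by nlinarith)
  refine derivable_of_red_stone (s := 1) (by omega) (G.p2_le i hi hn) hm (Or.inr (Or.inr hF))
    ((hred _ h₂ (G.p2_le i hi hn)).mono ?_ fun l hl => Or.inr (Or.inr hl)) ?_
    fun j'' hj'' hj''m hne'' => ?_
  · simpa using fun k hk => ⟨hk, G.p_ne i hi hn⟩
  · intro k hk hkm hkj
    rcases eq_or_ne k j' with rfl | hkj'
    · exact Or.inr (Or.inl rfl)
    · exact (hr k hk hkm hkj).imp (fun h => ⟨⟨h, by simp⟩, by simpa using hkj'⟩)
        fun h => Or.inr (Or.inr h)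
  · exact .of_mem_initial (innerClause_mem_stoneClauses hi hn hj hjm hj' hj'm hj'' hj''m hne'.symm
      hne''.symm) (by simp [Set.insert_subset_iff, hp, hF])

theorem derivable_redClause {i j : ℕ} (hi : 1 ≤ i) (hiN : i ≤ G.N) (hj : 1 ≤ j) (hjm : j ≤ m) :
    Derivable (stoneClauses G m) (redAbove G m i) (redAbove G m i) (varsAbove i \ {SV.r j})
      (redClause i j) (9 * m ^ 2) :=
  derivable_of_redOrKnown_above hi hiN hj hjm (Or.inl rfl) (Or.inr rfl)
    (fun u hu huN => Or.inr fun k hk hkm => ⟨⟨hu, by simp⟩, u, k, hu, huN, hk, hkm, rfl⟩)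
    fun k _ _ hkj => Or.inl ⟨trivial, by simpa using hkj⟩

theorem derivable_spineClause_of_red {i j : ℕ} (hi : i + 1 ≤ G.N) (hj : 1 ≤ j) (hjm : j ≤ m) :
    Derivable (stoneClauses G m) (redAbove G m (i + 1)) (redAbove G m (i + 1))
      (varsAbove (i + 1) \ {SV.r j})
      (insert (SV.r j, false) (insert (SV.p (i + 1) j, false) (spineClause i)))
      (9 * m ^ 2 + 2) := by
  rcases Nat.eq_zero_or_pos i with rfl | hi0
  · exact (derivable_of_sink hj hjm (Or.inr (Or.inl rfl)) (Or.inl rfl)).mono subset_rfl subset_rfl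
      (by omega)
  have hm : 1 ≤ m := hj.trans hjm
  have hsink : (SV.p 1 1, false) ∈ spineClause i := ⟨1, le_rfl, hi0, rfl⟩
  have htop : (SV.p i 1, false) ∈ spineClause i := ⟨i, hi0, le_rfl, rfl⟩
  rcases eq_or_ne j 1 with rfl | hj1
  · exact (derivable_of_sink hj hjm (Or.inr (Or.inr hsink)) (Or.inl rfl)).mono subset_rfl
      subset_rfl (by omega)
  refine Derivable.resolve (x := SV.r 1) ⟨trivial, by simpa using hj1.symm⟩
    (derivable_of_redOrKnown_above hi0 (by omega) le_rfl hm (Or.inr (Or.inr (Or.inr htop)))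
      (Or.inl rfl) ?_ ?_)
    (derivable_of_sink le_rfl hm (Or.inr (Or.inr (Or.inr hsink))) (Or.inl rfl))
  · intro u hu huN
    rcases eq_or_ne u (i + 1) with rfl | hne
    · exact Or.inl ⟨j, hj, hjm, hj1, Or.inr (Or.inr (Or.inl rfl)), Or.inr (Or.inl rfl)⟩
    · have hu' : i + 1 < u := by omega
      exact Or.inr fun k hk hkm => ⟨⟨⟨hu', by simp⟩, by simp⟩, u, k, hu', huN, hk, hkm, rfl⟩
  · intro k _ _ hk1
    rcases eq_or_ne k j with rfl | hkj
    · exact Or.inr (Or.inr (Or.inl rfl))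
    · exact Or.inl ⟨⟨trivial, by simpa using hkj⟩, by simpa using hk1⟩

theorem derivable_spineClause_learn {i j : ℕ} (hi : i + 1 ≤ G.N) (hj : 1 ≤ j) (hjm : j ≤ m) :
    Derivable (stoneClauses G m) (redAbove G m (i + 1))
      (insert (redClause (i + 1) j) (redAbove G m (i + 1))) (varsAbove (i + 1))
      (insert (SV.p (i + 1) j, false) (spineClause i)) (21 * m ^ 2) := by
  have hlearn := (derivable_redClause (by omega) hi hj hjm).learn
  have hclose := ((derivable_spineClause_of_red hi hj hjm).keep_lemmas subset_rfl).keep_lemmas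
    (Set.subset_insert (redClause (i + 1) j) _)
  refine (Derivable.resolve (x := SV.r j) (A := varsAbove (i + 1)) trivial
    (hlearn.mono subset_rfl ?_ le_rfl)
    (hclose.mono_lemmas subset_rfl Set.subset_union_left)).mono subset_rfl subset_rfl
    (by nlinarith [hj.trans hjm])
  simp [redClause, Set.insert_subset_iff]

theorem redAbove_subset_succ_union (hm : 2 ≤ m) (i : ℕ) :
    redAbove G m i ⊆ redAbove G m (i + 1) ∪
      ⋃ k < m - 1, {redClause (i + 1) (k + 2), redClause (i + 1) 1} := by
  rintro q ⟨u, j, hu, huN, hj, hjm, rfl⟩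
  rcases eq_or_ne u (i + 1) with rfl | hne
  · refine Or.inr (Set.mem_biUnion (show j - 2 < m - 1 by omega) ?_)
    rcases eq_or_ne j 1 with rfl | hj1
    · exact Or.inr rfl
    · exact Or.inl (by rw [Nat.sub_add_cancel (by omega : 2 ≤ j)])
  · exact Or.inl ⟨u, j, by omega, huN, hj, hjm, rfl⟩

theorem derivable_other_stones {L' : Set (Set (Lit SV))} {v : ℕ} (hv : 1 ≤ v) (hvN : v ≤ G.N)
    (hA : SV.p v 1 ∈ A)
    (h : Derivable (stoneClauses G m) L L' (A \ {SV.p v 1}) (insert (SV.p v 1, false) F) s) :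
    Derivable (stoneClauses G m) L L' A
      (F ∪ (fun k => (SV.p v (k + 2), true)) '' Set.Iio (m - 1)) (s + 2) := by
  refine (Derivable.resolve hA (.of_mem_initial (vertexClause_mem_stoneClauses hv hvN) ?_)
    (h.mono subset_rfl (Set.insert_subset_insert Set.subset_union_left) le_rfl)).mono subset_rfl
    subset_rfl (by omega)
  intro l hl
  obtain ⟨j, hj, rfl⟩ := Finset.mem_image.1 hl
  obtain ⟨hj, hjm⟩ := Finset.mem_Icc.1 hj
  rcases eq_or_ne j 1 with rfl | hj1
  · exact Or.inl rfl
  · exact Or.inr (Or.inr ⟨j - 2, show j - 2 < m - 1 by omega,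
      by simp [Nat.sub_add_cancel (by omega : 2 ≤ j)]⟩)

theorem derivable_spineClause_learn_two {i j : ℕ} (hi : i + 1 ≤ G.N) (hj : 1 ≤ j) (hjm : j ≤ m)
    (hp : SV.p (i + 1) 1 ∈ A) (hA : varsAbove (i + 1) ⊆ A \ {SV.p (i + 1) 1}) :
    Derivable (stoneClauses G m) (redAbove G m (i + 1))
      {redClause (i + 1) j, redClause (i + 1) 1} A
      (insert (SV.p (i + 1) j, false) (spineClause i)) (42 * m ^ 2 + 1) := by
  have hother := derivable_spineClause_learn hi hj hjm
  have hfirst := (derivable_spineClause_learn (m := m) hi le_rfl (hj.trans hjm)).keep_lemmas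
    (Set.subset_insert (redClause (i + 1) j) _)
  have hjoin := (hother.mono hA (Set.subset_insert (SV.p (i + 1) 1, true) _) le_rfl).resolve hp
    (hfirst.mono hA (Set.insert_subset_insert (Set.subset_insert _ _)) le_rfl)
  exact (hjoin.mono_lemmas subset_rfl (by simp [Set.insert_subset_iff])).mono subset_rfl subset_rfl
    (by omega)

theorem Derivable.spineClause_of_succ {i : ℕ} (hm : 2 ≤ m) (hi : i + 1 ≤ G.N)
    (h : Derivable (stoneClauses G m) ∅ (redAbove G m (i + 1)) (varsAbove (i + 1))
      (spineClause (i + 1)) s) :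
    Derivable (stoneClauses G m) ∅ (redAbove G m i) (varsAbove i) (spineClause i)
      (s + 42 * m ^ 3) := by
  set x : ℕ → SV := fun k => SV.p (i + 1) (k + 2) with hx
  have hfirst : SV.p (i + 1) 1 ∈ varsAbove i \ Set.range x := ⟨i.lt_succ_self, by simp [hx]⟩
  have hvars : varsAbove (i + 1) ⊆ (varsAbove i \ Set.range x) \ {SV.p (i + 1) 1} := by
    intro y hy
    obtain ⟨hyi, hyp⟩ := varsAbove_succ_subset i hy
    exact ⟨⟨hyi, fun ⟨k, hk⟩ => hyp ⟨_, hk⟩⟩, fun hy1 => hyp ⟨1, hy1.symm⟩⟩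
  rw [spineClause_succ] at h
  refine ((Derivable.resolve_all (x := x) (fun a b hab => by simpa [hx] using hab) (m - 1)
    (fun _ _ => i.lt_succ_self)
    (derivable_other_stones (by omega) hi hfirst (h.mono hvars subset_rfl le_rfl))
    fun k hk => derivable_spineClause_learn_two hi (by omega) (by omega) hfirst hvars).mono_lemmas
      subset_rfl (redAbove_subset_succ_union hm i)).mono subset_rfl subset_rfl ?_
  obtain ⟨n, rfl⟩ := Nat.exists_eq_add_of_le' hm
  rw [show n + 2 - 1 = n + 1 by omega]
  nlinarith [Nat.zero_le n]

theorem derivable_spineClause {i d : ℕ} (hm : 2 ≤ m) (hd : i + d = G.N) :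
    Derivable (stoneClauses G m) ∅ (redAbove G m i) (varsAbove i) (spineClause i)
      (21 * m ^ 2 + d * (42 * m ^ 3)) := by
  induction d generalizing i with
  | zero =>
    have hN := G.n_lt_N
    obtain ⟨e, rfl⟩ := Nat.exists_eq_add_of_le' (show 1 ≤ i by omega)
    have hlast := derivable_spineClause_learn (G := G) (m := m) (i := e) hd.le le_rfl (by omega)
    rw [← spineClause_succ, redAbove_eq_empty hd.ge] at hlast
    rw [redAbove_eq_empty hd.ge]
    exact (hlast.mono_lemmas subset_rfl (Set.empty_subset _)).mono subset_rfl subset_rfl (by simp)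
  | succ d ih =>
    exact ((ih (i := i + 1) (by omega)).spineClause_of_succ hm (by omega)).mono subset_rfl
      subset_rfl (by rw [Nat.add_one_mul d, add_assoc])

theorem derivable_empty_of_one_stone (G : StoneDag) :
    Derivable (stoneClauses G 1) ∅ ∅ Set.univ ∅ 7 := by
  have hN := G.n_lt_N
  have hvertex : ∀ {v A F}, 1 ≤ v → v ≤ G.N → (SV.p v 1, true) ∈ F →
      Derivable (stoneClauses G 1) ∅ ∅ A F 1 := fun hv hvN hF =>
    .of_mem_initial (vertexClause_mem_stoneClauses hv hvN) (by simpa using hF)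
  refine Derivable.resolve (x := SV.p G.N 1) trivial (s₂ := 5)
    (hvertex (by omega) le_rfl (Or.inl rfl)) ?_
  refine Derivable.resolve_of_mem_or (x := SV.p 1 1) (s₁ := 1) (s₂ := 3) ?_
    (hvertex le_rfl (by omega) (Or.inl rfl)) ?_
  · by_cases h : SV.p 1 1 = SV.p G.N 1
    · exact Or.inr (by simp [h])
    · exact Or.inl ⟨trivial, h⟩
  · refine Derivable.resolve (x := SV.r 1) (by simp)
      (.of_mem_initial (sourceClause_mem_stoneClauses hN le_rfl le_rfl le_rfl) ?_)
      (derivable_of_sink le_rfl le_rfl (Or.inr (Or.inl rfl)) (Or.inl rfl))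
    simp [Set.insert_subset_iff]

end Stone

theorem stone_regWRTL_general : ∃ c : ℕ, ∀ (G : StoneDag) (m : ℕ), 1 ≤ m →
    ∃ T : PTree SV, RegWRTLRefutation (stoneClauses G m) T ∧
      T.size ≤ c * G.N * m ^ 3 := by
  refine ⟨63, fun G m hm => ?_⟩
  have hN : 1 ≤ G.N := Nat.one_le_of_lt G.n_lt_N
  obtain rfl | hm := hm.eq_or_lt
  · obtain ⟨T, hT, hsize⟩ := (derivable_empty_of_one_stone G).exists_regWRTLRefutation
    exact ⟨T, hT, by omega⟩
  · have hroot := derivable_spineClause (G := G) hm (zero_add G.N)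
    rw [spineClause_zero] at hroot
    obtain ⟨T, hT, hsize⟩ := hroot.exists_regWRTLRefutation
    have hbase : m ^ 2 ≤ G.N * m ^ 3 :=
      (Nat.pow_le_pow_right (by omega) (by omega)).trans (Nat.le_mul_of_pos_left _ hN)
    exact ⟨T, hT, by linarith⟩

/-- `Stone(G,m)` has regWRTL refutations of size `O(N·m³)`. -/
theorem stone_regWRTL : ∃ c : ℕ, ∀ (G : StoneDag) (m : ℕ), G.N ≤ m →
    ∃ T : PTree SV, RegWRTLRefutation (stoneClauses G m) T ∧
      T.size ≤ c * G.N * m ^ 3 := by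
  obtain ⟨c, hc⟩ := stone_regWRTL_general
  exact ⟨c, fun G m hm => hc G m ((Nat.one_le_of_lt G.n_lt_N).trans hm)⟩
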